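/- Let b > 0 be real. For every η ∈ (0, (b+b⁻¹)/2), one has e_b(z) → 1 as Re z → −∞, uniformly for z in the strip |Im z| ≤ (b+b⁻¹)/2 − η; consequently e_b(z)·e^{−πiz²} → e^{πi(b²+b⁻²)/12} as Re z → +∞, uniformly in the same strip. -/

import Mathlib

/-!
After the shift `w = t + iε`, the integrand `K_z(w)` of `log e_b` has modulus
`O(e^{2ε Re z} e^{-a|t|})` with `a = b + b⁻¹ - 2|Im z| > 0`, so the integral, and with it
`log e_b(z)`, tends to `0` as `Re z → -∞`, uniformly in every smaller closed strip.

The behaviour at the other end follows by reflection. Since `K_z(-w) = -K_{-z}(w)`, the sum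
`K_z + K_{-z}` is an odd function of `w`, so its integrals along `ℝ + iε` and `ℝ - iε` are opposite;
they differ by `2πi` times the residue at `0`, hence the upper one is `-πi` times that residue. The
residue is read off from the quadratic expansion of
`cos (2zw) · (bw / sinh (bw)) · (b⁻¹w / sinh (b⁻¹w))`, and the result is the inversion relation
`e_b(z) e_b(-z) = exp (πi (z² + (b² + b⁻²) / 12))`. Dividing by `e_b(-z) → 1` gives the limit as
`Re z → +∞`.
-/

open MeasureTheory Complex Real Filter Topology

noncomputable section

/-- The special point `c_b = i(b+b⁻¹)/2`. -/
def cb (b : ℝ) : ℂ := Complex.I * ((b : ℂ) + (b : ℂ)⁻¹) / 2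

/-- The integrand in the integral representation of the noncompact quantum dilogarithm. -/
def ebIntegrand (b ε : ℝ) (z : ℂ) (t : ℝ) : ℂ :=
  Complex.exp (-2 * Complex.I * z * ((t : ℂ) + Complex.I * (ε : ℂ))) /
    (((t : ℂ) + Complex.I * (ε : ℂ)) *
      Complex.sinh ((b : ℂ) * ((t : ℂ) + Complex.I * (ε : ℂ))) *
      Complex.sinh ((b : ℂ)⁻¹ * ((t : ℂ) + Complex.I * (ε : ℂ))))

/-- The noncompact quantum dilogarithm defined with contour parameter `ε`. -/
def ebE (b ε : ℝ) (z : ℂ) : ℂ :=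
  Complex.exp ((1 / 4 : ℂ) * ∫ t : ℝ, ebIntegrand b ε z t)

/-- The noncompact quantum dilogarithm `e_b` (canonical choice of contour parameter;
the value is independent of this choice). -/
def eb (b : ℝ) (z : ℂ) : ℂ := ebE b (π * min b b⁻¹ / 2) z

/-- The filter along which `Re w` tends to `l` while `w` stays in the closed strip `|Im w| ≤ c`.
Convergence along it is convergence as `Re w → l`, uniformly in the strip. -/
def stripFilter (l : Filter ℝ) (c : ℝ) : Filter ℂ :=
  comap Complex.re l ⊓ 𝓟 {w | |w.im| ≤ c}

/-- The integrand of the logarithm of the double sine function with periods `ω₁`, `ω₂`; the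
noncompact quantum dilogarithm is the case `ω₁ = b`, `ω₂ = b⁻¹`. -/
def doubleSineKernel (ω₁ ω₂ : ℝ) (z w : ℂ) : ℂ :=
  Complex.exp (-2 * Complex.I * z * w) / (w * Complex.sinh (ω₁ * w) * Complex.sinh (ω₂ * w))

section StripFilter

variable {l : Filter ℝ} {c : ℝ}

lemma eventually_stripFilter {p : ℂ → Prop} :
    (∀ᶠ w in stripFilter l c, p w) ↔ ∀ᶠ x in l, ∀ w : ℂ, w.re = x → |w.im| ≤ c → p w := by
  simp only [stripFilter, eventually_inf_principal, eventually_comap, Set.mem_ofPred_eq]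

lemma tendsto_re_stripFilter : Tendsto Complex.re (stripFilter l c) l :=
  tendsto_comap.mono_left inf_le_left

lemma eventually_abs_im_le_stripFilter : ∀ᶠ w in stripFilter l c, |w.im| ≤ c :=
  eventually_stripFilter.2 <| .of_forall fun _ _ _ h => h

lemma tendsto_neg_stripFilter_atTop :
    Tendsto (fun w : ℂ => -w) (stripFilter atTop c) (stripFilter atBot c) := by
  refine tendsto_inf.2 ⟨tendsto_comap_iff.2 ?_, tendsto_principal.2 ?_⟩
  · exact tendsto_neg_atTop_atBot.comp tendsto_re_stripFilter
  · simpa using eventually_abs_im_le_stripFilter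

lemma stripFilter_cocompact_le_cobounded :
    stripFilter (cocompact ℝ) c ≤ Bornology.cobounded ℂ := by
  refine tendsto_id'.1 (tendsto_norm_atTop_iff_cobounded.1 ?_)
  exact tendsto_atTop_mono Complex.abs_re_le_norm
    (tendsto_norm_cocompact_atTop.comp tendsto_re_stripFilter)

lemma tendsto_line_stripFilter {y : ℝ} (hy : |y| ≤ c) :
    Tendsto (fun t : ℝ => (t : ℂ) + y * Complex.I) l (stripFilter l c) := by
  refine tendsto_inf.2 ⟨tendsto_comap_iff.2 ?_, tendsto_principal.2 (.of_forall fun t => ?_)⟩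
  · simpa [Function.comp_def] using! tendsto_id
  · simpa using hy

end StripFilter

section ContourShift

lemma tendsto_integral_vertical_segment {l : Filter ℝ} {q : ℂ → ℂ} {c : ℝ} (hc : 0 ≤ c)
    (hq : Tendsto q (stripFilter l c) (𝓝 0)) :
    Tendsto (fun x : ℝ => ∫ y in (-c)..c, q (x + y * Complex.I)) l (𝓝 0) := by
  rw [Metric.tendsto_nhds]
  intro δ hδ
  set δ' : ℝ := δ / (|c - -c| + 1)
  have hδ' : 0 < δ' := by positivity
  filter_upwards [eventually_stripFilter.1 (Metric.tendsto_nhds.1 hq δ' hδ')] with x hx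
  have hbound : ‖∫ y in (-c)..c, q (x + y * Complex.I)‖ ≤ δ' * |c - -c| := by
    refine intervalIntegral.norm_integral_le_of_norm_le_const fun y hy => ?_
    rw [Set.uIoc_of_le (by linarith)] at hy
    have hsmall := hx (x + y * Complex.I) (by simp)
      (by simpa using abs_le.2 ⟨hy.1.le, hy.2⟩)
    exact (dist_zero_right (q _) ▸ hsmall).le
  calc dist (∫ y in (-c)..c, q (x + y * Complex.I)) 0 ≤ δ' * |c - -c| := by
        rwa [dist_zero_right]
    _ < δ' * (|c - -c| + 1) := by gcongr; linarith
    _ = δ := div_mul_cancel₀ _ (by positivity)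

lemma tendsto_integral_line_sub_integral_line {q : ℂ → ℂ} {c : ℝ} (hc : 0 ≤ c)
    (hd : DifferentiableOn ℂ q {w | |w.im| ≤ c})
    (hq : Tendsto q (stripFilter (cocompact ℝ) c) (𝓝 0)) :
    Tendsto (fun T : ℝ => (∫ t in (-T)..T, q (t + c * Complex.I)) -
      ∫ t in (-T)..T, q (t + (-c : ℝ) * Complex.I)) atTop (𝓝 0) := by
  have hvert := tendsto_integral_vertical_segment hc hq
  rw [cocompact_eq_atBot_atTop, tendsto_sup] at hvert
  have hsides := ((hvert.2.sub (hvert.1.comp tendsto_neg_atTop_atBot)).const_mul Complex.I)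
  rw [sub_zero, mul_zero] at hsides
  refine hsides.congr fun T => ?_
  have hrect := Complex.integral_boundary_rect_eq_zero_of_differentiableOn q
    ⟨-T, -c⟩ ⟨T, c⟩ (hd.mono fun w hw => ?_)
  · simp only [smul_eq_mul] at hrect
    simp only [Function.comp_apply]
    linear_combination hrect
  · have him : w.im ∈ Set.uIcc (-c) c := hw.2
    rw [Set.uIcc_of_le (by linarith)] at him
    exact abs_le.2 him

lemma exists_differentiableOn_of_tendsto_mul_sub {f : ℂ → ℂ} {s : Set ℂ} {a : ℂ} (hs : s ∈ 𝓝 a)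
    (hd : DifferentiableOn ℂ f (s \ {a})) (hf : Tendsto (fun w => (w - a) * f w) (𝓝[≠] a) (𝓝 0)) :
    ∃ q : ℂ → ℂ, DifferentiableOn ℂ q s ∧ ∀ w ≠ a, q w = f w := by
  refine ⟨Function.update f a (limUnder (𝓝[≠] a) f),
    Complex.differentiableOn_update_limUnder_of_isLittleO hs hd ?_,
    fun w hw => Function.update_of_ne hw _ _⟩
  have hsub : Tendsto (fun w : ℂ => w - a) (𝓝[≠] a) (𝓝 0) :=
    tendsto_sub_nhds_zero_iff.2 (tendsto_id.mono_left nhdsWithin_le_nhds)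
  have hlim := hf.sub (hsub.mul_const (f a))
  rw [zero_mul, sub_zero] at hlim
  refine (Asymptotics.isLittleO_iff_tendsto' ?_).2 (hlim.congr fun w => ?_)
  · filter_upwards [self_mem_nhdsWithin] with w hw h
    exact absurd (inv_eq_zero.1 h) (sub_ne_zero.2 hw)
  · rw [div_inv_eq_mul]; ring

lemma ofReal_add_mul_I_ne_zero {y : ℝ} (hy : y ≠ 0) (x : ℝ) : (x : ℂ) + y * Complex.I ≠ 0 :=
  fun h => hy (by simpa using congrArg Complex.im h)

lemma integral_symm_interval_line_neg {f : ℂ → ℂ} (hodd : ∀ w, f (-w) = -f w) (y T : ℝ) :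
    ∫ t in (-T)..T, f (t + (-y : ℝ) * Complex.I) = -∫ t in (-T)..T, f (t + y * Complex.I) := by
  rw [← intervalIntegral.integral_neg]
  conv_rhs => rw [← neg_neg T, ← intervalIntegral.integral_comp_neg]
  rw [neg_neg]
  refine intervalIntegral.integral_congr fun t _ => ?_
  simp only [← hodd]
  congr 1
  push_cast
  ring

lemma tendsto_integral_line_of_odd {f : ℂ → ℂ} {s : Set ℂ} {c : ℝ} (hc : 0 < c) (hs : IsOpen s)
    (hcs : {w : ℂ | |w.im| ≤ c} ⊆ s) (hd : DifferentiableOn ℂ f (s \ {0}))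
    (hodd : ∀ w, f (-w) = -f w) (hdecay : Tendsto f (stripFilter (cocompact ℝ) c) (𝓝 0))
    (hpole : Tendsto (fun w => w * f w) (𝓝[≠] 0) (𝓝 0)) :
    Tendsto (fun T : ℝ => ∫ t in (-T)..T, f (t + c * Complex.I)) atTop (𝓝 0) := by
  obtain ⟨q, hqd, hqf⟩ := exists_differentiableOn_of_tendsto_mul_sub
    (hs.mem_nhds (hcs (by simpa using hc.le))) hd (by simpa using hpole)
  have hq_line : ∀ y : ℝ, y ≠ 0 → ∀ T : ℝ, ∫ t in (-T)..T, q (t + y * Complex.I) =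
      ∫ t in (-T)..T, f (t + y * Complex.I) := fun y hy T =>
    intervalIntegral.integral_congr fun t _ => hqf _ (ofReal_add_mul_I_ne_zero hy t)
  have hq_decay : Tendsto q (stripFilter (cocompact ℝ) c) (𝓝 0) := by
    refine hdecay.congr' ?_
    filter_upwards [stripFilter_cocompact_le_cobounded (Bornology.eventually_ne_cobounded 0)]
      with w hw using (hqf w hw).symm
  have hshift := tendsto_integral_line_sub_integral_line hc.le (hqd.mono hcs) hq_decay
  simp only [hq_line c hc.ne', hq_line (-c) (neg_ne_zero.2 hc.ne'),
    integral_symm_interval_line_neg hodd] at hshift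
  simpa [← two_mul] using hshift.const_mul (1 / 2 : ℂ)

end ContourShift

section PrincipalPart

lemma continuous_inv_line {c : ℝ} (hc : c ≠ 0) :
    Continuous fun t : ℝ => ((t : ℂ) + c * Complex.I)⁻¹ :=
  Continuous.inv₀ (by fun_prop) (ofReal_add_mul_I_ne_zero hc)

lemma tendsto_inv_line {l : Filter ℝ} (hl : l ≤ cocompact ℝ) (c : ℝ) :
    Tendsto (fun t : ℝ => ((t : ℂ) + c * Complex.I)⁻¹) l (𝓝 0) :=
  tendsto_inv₀_cobounded.comp <| stripFilter_cocompact_le_cobounded.trans' <|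
    (tendsto_line_stripFilter (le_refl |c|)).mono_left hl

lemma integral_inv_line_pow {c : ℝ} (hc : c ≠ 0) (n : ℕ) (x y : ℝ) :
    ∫ t in x..y, ((t : ℂ) + c * Complex.I)⁻¹ ^ (n + 2) =
      (((x : ℂ) + c * Complex.I)⁻¹ ^ (n + 1) - ((y : ℂ) + c * Complex.I)⁻¹ ^ (n + 1)) /
        (n + 1) := by
  have hderiv (t : ℝ) : HasDerivAt
      (fun t : ℝ => -((t : ℂ) + c * Complex.I)⁻¹ ^ (n + 1) / (n + 1))
      (((t : ℂ) + c * Complex.I)⁻¹ ^ (n + 2)) t := by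
    have hline : HasDerivAt (fun t : ℝ => (t : ℂ) + c * Complex.I) 1 t :=
      (Complex.ofRealCLM.hasDerivAt (x := t)).add_const _
    have hinv := hline.fun_inv (ofReal_add_mul_I_ne_zero hc t)
    refine ((hinv.fun_pow (n + 1)).neg.div_const _).congr_deriv ?_
    have : (n : ℂ) + 1 ≠ 0 := by exact_mod_cast n.succ_ne_zero
    push_cast
    field_simp
    simp [pow_add, div_eq_mul_inv]
  rw [intervalIntegral.integral_eq_sub_of_hasDerivAt (fun t _ => hderiv t)
    (((continuous_inv_line hc).pow _).intervalIntegrable _ _)]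
  ring

lemma tendsto_integral_inv_line_pow {c : ℝ} (hc : c ≠ 0) (n : ℕ) :
    Tendsto (fun T : ℝ => ∫ t in (-T)..T, ((t : ℂ) + c * Complex.I)⁻¹ ^ (n + 2))
      atTop (𝓝 0) := by
  simp only [integral_inv_line_pow hc]
  have htop := (tendsto_inv_line atTop_le_cocompact c).pow (n + 1)
  have hbot := ((tendsto_inv_line atBot_le_cocompact c).comp tendsto_neg_atTop_atBot).pow (n + 1)
  simpa [Function.comp_def] using (hbot.sub htop).div_const ((n : ℂ) + 1)

lemma inv_line_sub_inv_line_neg {c : ℝ} (hc : c ≠ 0) (t : ℝ) :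
    ((t : ℂ) + c * Complex.I)⁻¹ - ((t : ℂ) + (-c : ℝ) * Complex.I)⁻¹ =
      -2 * Complex.I * (c / (c ^ 2 + t ^ 2) : ℝ) := by
  have hupper := ofReal_add_mul_I_ne_zero hc t
  have hlower := ofReal_add_mul_I_ne_zero (neg_ne_zero.2 hc) t
  have hsq : (c : ℂ) ^ 2 + t ^ 2 ≠ 0 := by exact_mod_cast (by positivity : c ^ 2 + t ^ 2 ≠ 0)
  rw [inv_sub_inv hupper hlower]
  push_cast at hlower ⊢
  rw [mul_div_assoc', div_eq_div_iff (mul_ne_zero hupper hlower) hsq]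
  linear_combination (-2 * Complex.I * c ^ 3) * Complex.I_sq

lemma integral_symm_interval_inv_line {c : ℝ} (hc : c ≠ 0) (T : ℝ) :
    ∫ t in (-T)..T, ((t : ℂ) + c * Complex.I)⁻¹ =
      -(2 * (Real.arctan (T / c) : ℝ) * Complex.I) := by
  have hdiff := intervalIntegral.integral_sub
    ((continuous_inv_line hc).intervalIntegrable (μ := volume) (-T) T)
    ((continuous_inv_line (neg_ne_zero.2 hc)).intervalIntegrable (μ := volume) (-T) T)
  rw [integral_symm_interval_line_neg (f := Inv.inv) (fun w => inv_neg),
    funext (inv_line_sub_inv_line_neg hc), intervalIntegral.integral_const_mul,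
    intervalIntegral.integral_ofReal, integral_div_sq_add_sq, neg_div, Real.arctan_neg,
    Complex.ofReal_sub, Complex.ofReal_neg] at hdiff
  linear_combination -hdiff / 2

lemma tendsto_integral_inv_line {c : ℝ} (hc : 0 < c) :
    Tendsto (fun T : ℝ => ∫ t in (-T)..T, ((t : ℂ) + c * Complex.I)⁻¹) atTop
      (𝓝 (-(π * Complex.I))) := by
  simp only [integral_symm_interval_inv_line hc.ne']
  have harctan : Tendsto (fun T : ℝ => ((Real.arctan (T / c) : ℝ) : ℂ)) atTop
      (𝓝 ((π / 2 : ℝ) : ℂ)) :=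
    (Complex.continuous_ofReal.tendsto _).comp <|
      (tendsto_nhds_of_tendsto_nhdsWithin Real.tendsto_arctan_atTop).comp
        (tendsto_id.atTop_div_const hc)
  have hlim := ((harctan.const_mul 2).mul_const Complex.I).neg
  rwa [Complex.ofReal_div, Complex.ofReal_ofNat, mul_div_cancel₀ _ two_ne_zero] at hlim

lemma tendsto_integral_principalPart_line {c : ℝ} (hc : 0 < c) (α β : ℂ) :
    Tendsto (fun T : ℝ => ∫ t in (-T)..T,
      (α * ((t : ℂ) + c * Complex.I)⁻¹ ^ 3 + β * ((t : ℂ) + c * Complex.I)⁻¹)) atTop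
      (𝓝 (-(π * Complex.I * β))) := by
  have hcube := (tendsto_integral_inv_line_pow hc.ne' 1).const_mul α
  have hsimple := (tendsto_integral_inv_line hc).const_mul β
  have hsum := hcube.add hsimple
  rw [show α * 0 + β * -(π * Complex.I) = -(π * Complex.I * β) by ring] at hsum
  refine hsum.congr fun T => ?_
  rw [← intervalIntegral.integral_const_mul, ← intervalIntegral.integral_const_mul,
    ← intervalIntegral.integral_add]
  · exact (continuous_const.mul ((continuous_inv_line hc.ne').pow 3)).intervalIntegrable _ _
  · exact (continuous_const.mul (continuous_inv_line hc.ne')).intervalIntegrable _ _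

theorem integral_line_of_odd {f : ℂ → ℂ} {s : Set ℂ} {c : ℝ} {α β : ℂ} (hc : 0 < c)
    (hs : IsOpen s) (hcs : {w : ℂ | |w.im| ≤ c} ⊆ s) (hd : DifferentiableOn ℂ f (s \ {0}))
    (hodd : ∀ w, f (-w) = -f w) (hdecay : Tendsto f (stripFilter (cocompact ℝ) c) (𝓝 0))
    (hint : Integrable fun t : ℝ => f (t + c * Complex.I))
    (hpole : Tendsto (fun w => w * (f w - (α * w⁻¹ ^ 3 + β * w⁻¹))) (𝓝[≠] 0) (𝓝 0)) :
    ∫ t : ℝ, f (t + c * Complex.I) = -(π * Complex.I * β) := by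
  have hinv : Tendsto (fun w : ℂ => w⁻¹) (stripFilter (cocompact ℝ) c) (𝓝 0) :=
    tendsto_inv₀_cobounded.mono_left stripFilter_cocompact_le_cobounded
  have hregular := tendsto_integral_line_of_odd
    (f := fun w => f w - (α * w⁻¹ ^ 3 + β * w⁻¹)) hc hs hcs ?_ ?_ ?_ hpole
  · have hcont : Continuous fun t : ℝ =>
        α * ((t : ℂ) + c * Complex.I)⁻¹ ^ 3 + β * ((t : ℂ) + c * Complex.I)⁻¹ :=
      (continuous_const.mul ((continuous_inv_line hc.ne').pow 3)).add
        (continuous_const.mul (continuous_inv_line hc.ne'))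
    have hsum := hregular.add (tendsto_integral_principalPart_line hc α β)
    rw [zero_add] at hsum
    have hwhole := intervalIntegral_tendsto_integral hint tendsto_neg_atTop_atBot tendsto_id
    refine tendsto_nhds_unique hwhole (hsum.congr fun T => ?_)
    rw [intervalIntegral.integral_sub hint.intervalIntegrable (hcont.intervalIntegrable _ _),
      sub_add_cancel, id]
  · fun_prop (disch := simp)
  · intro w
    rw [hodd, inv_neg, Odd.neg_pow (by decide)]
    ring
  · simpa using hdecay.sub (((hinv.pow 3).const_mul α).add (hinv.const_mul β))

end PrincipalPart

section QuadraticExpansion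

/-- The second-order expansion `f w = 1 + a w² + o(w²)` as `w → 0`, phrased on the punctured
neighbourhood so that the value of `f` at `0` is irrelevant. -/
def HasQuadraticExpansion (f : ℂ → ℂ) (a : ℂ) : Prop :=
  Tendsto (fun w => (f w - 1) / w ^ 2) (𝓝[≠] 0) (𝓝 a)

namespace HasQuadraticExpansion

variable {f g : ℂ → ℂ} {a a' : ℂ}

lemma tendsto_one (hf : HasQuadraticExpansion f a) : Tendsto f (𝓝[≠] 0) (𝓝 1) := by
  have hsq : Tendsto (fun w : ℂ => w ^ 2) (𝓝[≠] 0) (𝓝 (0 ^ 2)) :=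
    ((continuous_pow 2).tendsto 0).mono_left nhdsWithin_le_nhds
  have hlim := (Tendsto.mul hf hsq).add_const 1
  rw [zero_pow two_ne_zero, mul_zero, zero_add] at hlim
  refine hlim.congr' ?_
  filter_upwards [self_mem_nhdsWithin] with w hw
  rw [div_mul_cancel₀ _ (pow_ne_zero 2 hw), sub_add_cancel]

lemma mul (hf : HasQuadraticExpansion f a) (hg : HasQuadraticExpansion g a') :
    HasQuadraticExpansion (fun w => f w * g w) (a + a') := by
  have hlim := (Tendsto.mul hf hg.tendsto_one).add hg
  rw [mul_one] at hlim
  exact hlim.congr fun w => by ring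

lemma inv (hf : HasQuadraticExpansion f a) : HasQuadraticExpansion (fun w => (f w)⁻¹) (-a) := by
  have hlim := (Tendsto.mul hf (hf.tendsto_one.inv₀ one_ne_zero)).neg
  rw [inv_one, mul_one] at hlim
  refine hlim.congr' ?_
  filter_upwards [hf.tendsto_one.eventually_ne one_ne_zero] with w hw
  field_simp
  ring

lemma comp_const_mul (hf : HasQuadraticExpansion f a) {k : ℂ} (hk : k ≠ 0) :
    HasQuadraticExpansion (fun w => f (k * w)) (k ^ 2 * a) := by
  have hscale : Tendsto (fun w : ℂ => k * w) (𝓝[≠] 0) (𝓝[≠] 0) := by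
    refine tendsto_nhdsWithin_iff.2 ⟨?_, eventually_mem_nhdsWithin.mono fun w hw => ?_⟩
    · simpa using ((continuous_const_mul k).tendsto 0).mono_left nhdsWithin_le_nhds
    · exact mul_ne_zero hk hw
  refine ((Tendsto.comp hf hscale).const_mul (k ^ 2)).congr fun w => ?_
  simp only [Function.comp_apply]
  field_simp

lemma tendsto_mul_sub_principalPart (hf : HasQuadraticExpansion f a) (α : ℂ) :
    Tendsto (fun w => w * (α * w⁻¹ ^ 3 * f w - (α * w⁻¹ ^ 3 + α * a * w⁻¹))) (𝓝[≠] 0) (𝓝 0) := by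
  have hlim := (Tendsto.sub_const hf a).const_mul α
  rw [sub_self, mul_zero] at hlim
  refine hlim.congr' ?_
  filter_upwards [self_mem_nhdsWithin] with w hw
  have hw : w ≠ 0 := hw
  field_simp
  ring

end HasQuadraticExpansion

lemma hasQuadraticExpansion_sinh_div :
    HasQuadraticExpansion (fun w => Complex.sinh w / w) (1 / 6) := by
  have hexp := (Complex.exp_sub_sum_range_succ_isLittleO_pow 3).tendsto_div_nhds_zero
  have hneg : Tendsto (fun w : ℂ => -w) (𝓝 0) (𝓝 0) := by
    simpa using continuous_neg.tendsto (0 : ℂ)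
  have hlim := (((hexp.add (hexp.comp hneg)).div_const 2).mono_left
    (nhdsWithin_le_nhds (s := {0}ᶜ))).add_const (1 / 6 : ℂ)
  rw [add_zero, zero_div, zero_add] at hlim
  refine hlim.congr' ?_
  filter_upwards [self_mem_nhdsWithin] with w hw
  have hw : w ≠ 0 := hw
  simp only [Finset.sum_range_succ, Nat.factorial, Complex.sinh, Function.comp_apply]
  field_simp
  simp only [Finset.range_zero, Finset.sum_empty]
  push_cast
  ring

lemma hasQuadraticExpansion_cos_two_mul (z : ℂ) :
    HasQuadraticExpansion (fun w => Complex.cos (2 * (z * w))) (-(2 * z ^ 2)) := by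
  have hsin : HasDerivAt (fun w : ℂ => Complex.sin (z * w)) z 0 := by
    simpa using ((hasDerivAt_id (0 : ℂ)).const_mul z).csin
  have hslope := hasDerivAt_iff_tendsto_slope_zero.1 hsin
  simp only [zero_add, mul_zero, Complex.sin_zero, sub_zero, smul_eq_mul] at hslope
  refine ((hslope.pow 2).const_mul (2 : ℂ)).neg.congr fun w => ?_
  simp only [Complex.cos_two_mul, Complex.cos_sq']
  ring

end QuadraticExpansion

section SinhBounds

lemma norm_sinh_sq (w : ℂ) :
    ‖Complex.sinh w‖ ^ 2 = Real.sinh w.re ^ 2 + Real.sin w.im ^ 2 := by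
  conv_lhs => rw [← Complex.re_add_im w]
  rw [Complex.sinh_add, Complex.sinh_mul_I, Complex.cosh_mul_I, ← Complex.normSq_eq_norm_sq,
    Complex.normSq_apply]
  simp only [← Complex.ofReal_sinh, ← Complex.ofReal_cosh, ← Complex.ofReal_sin,
    ← Complex.ofReal_cos, Complex.add_re, Complex.add_im, Complex.mul_re, Complex.mul_im,
    Complex.ofReal_re, Complex.ofReal_im, Complex.I_re, Complex.I_im]
  linear_combination Real.sinh w.re ^ 2 * Real.sin_sq_add_cos_sq w.im +
    Real.sin w.im ^ 2 * Real.cosh_sq w.re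

lemma sinh_ne_zero_of_abs_im_lt_pi {w : ℂ} (hw : w ≠ 0) (him : |w.im| < π) :
    Complex.sinh w ≠ 0 := by
  intro hsinh
  have hnorm := norm_sinh_sq w
  rw [hsinh, norm_zero, zero_pow two_ne_zero, eq_comm,
    add_eq_zero_iff_of_nonneg (sq_nonneg _) (sq_nonneg _), sq_eq_zero_iff, sq_eq_zero_iff,
    Real.sinh_eq_zero, Real.sin_eq_zero_iff_of_lt_of_lt (abs_lt.1 him).1 (abs_lt.1 him).2] at hnorm
  exact hw (Complex.ext hnorm.1 hnorm.2)

lemma abs_sin_im_mul_exp_abs_re_le_norm_sinh (w : ℂ) :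
    |Real.sin w.im| / 2 * Real.exp |w.re| ≤ ‖Complex.sinh w‖ := by
  have hcosh : Real.exp |w.re| ≤ 2 * Real.cosh w.re := by
    rw [← Real.cosh_abs, Real.cosh_eq]
    linarith [Real.exp_pos (-|w.re|)]
  calc |Real.sin w.im| / 2 * Real.exp |w.re|
      ≤ |Real.sin w.im| / 2 * (2 * Real.cosh w.re) := by gcongr
    _ = |Real.sin w.im| * Real.cosh w.re := by ring
    _ ≤ ‖Complex.sinh w‖ := by
      refine le_of_sq_le_sq ?_ (norm_nonneg _)
      rw [norm_sinh_sq, mul_pow, sq_abs, Real.cosh_sq]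
      nlinarith [sq_nonneg (Real.sinh w.re), Real.sin_sq_le_one w.im]

lemma exp_abs_re_le_norm_sinh {w : ℂ} (hw : 1 ≤ |w.re|) :
    1 / 4 * Real.exp |w.re| ≤ ‖Complex.sinh w‖ := by
  have hsinh : 1 / 4 * Real.exp |w.re| ≤ |Real.sinh w.re| := by
    rw [Real.abs_sinh, Real.sinh_eq]
    have hlarge : 2 ≤ Real.exp |w.re| := by linarith [Real.add_one_le_exp |w.re|]
    have hsmall : Real.exp (-|w.re|) ≤ 1 := Real.exp_le_one_iff.2 (by linarith)
    linarith
  refine hsinh.trans (abs_le_of_sq_le_sq ?_ (norm_nonneg _))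
  rw [norm_sinh_sq]
  exact le_add_of_nonneg_right (sq_nonneg _)

end SinhBounds

lemma integrable_exp_neg_mul_abs {a : ℝ} (ha : 0 < a) :
    Integrable fun t : ℝ => Real.exp (-a * |t|) := by
  rw [← integrableOn_univ, ← Set.Iic_union_Ioi (a := (0 : ℝ)), integrableOn_union]
  refine ⟨(integrableOn_exp_mul_Iic ha 0).congr_fun (fun t ht => ?_) measurableSet_Iic,
    (integrableOn_exp_mul_Ioi (neg_lt_zero.2 ha) 0).congr_fun (fun t ht => ?_) measurableSet_Ioi⟩
  · simp only [abs_of_nonpos (Set.mem_Iic.1 ht), neg_mul_neg]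
  · simp only [abs_of_pos (Set.mem_Ioi.1 ht)]

section DoubleSineKernel

variable {ω₁ ω₂ c σ : ℝ} {z w : ℂ}

lemma doubleSineKernel_neg_right (ω₁ ω₂ : ℝ) (z w : ℂ) :
    doubleSineKernel ω₁ ω₂ z (-w) = -doubleSineKernel ω₁ ω₂ (-z) w := by
  simp only [doubleSineKernel, mul_neg, neg_mul, Complex.sinh_neg, neg_neg, div_neg]

lemma doubleSineKernel_add_neg_left (hω₁ : ω₁ ≠ 0) (hω₂ : ω₂ ≠ 0) (z w : ℂ) :
    doubleSineKernel ω₁ ω₂ z w + doubleSineKernel ω₁ ω₂ (-z) w =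
      2 / (ω₁ * ω₂) * w⁻¹ ^ 3 * (Complex.cos (2 * (z * w)) *
        ((Complex.sinh (ω₁ * w) / (ω₁ * w))⁻¹ * (Complex.sinh (ω₂ * w) / (ω₂ * w))⁻¹)) := by
  rcases eq_or_ne w 0 with rfl | hw
  · simp [doubleSineKernel]
  have hω₁ : (ω₁ : ℂ) ≠ 0 := Complex.ofReal_ne_zero.2 hω₁
  have hω₂ : (ω₂ : ℂ) ≠ 0 := Complex.ofReal_ne_zero.2 hω₂
  have hexp : Complex.exp (-2 * Complex.I * z * w) + Complex.exp (-2 * Complex.I * -z * w) =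
      2 * Complex.cos (2 * (z * w)) := by
    rw [Complex.two_cos, add_comm]
    ring_nf
  rw [doubleSineKernel, doubleSineKernel, ← add_div, hexp, inv_div, inv_div]
  simp only [div_eq_mul_inv, mul_inv]
  field_simp

lemma differentiableAt_doubleSineKernel (hω₁ : 0 < ω₁) (hω₂ : 0 < ω₂) (hw : w ≠ 0)
    (h₁ : ω₁ * |w.im| < π) (h₂ : ω₂ * |w.im| < π) :
    DifferentiableAt ℂ (doubleSineKernel ω₁ ω₂ z) w := by
  have hsinh {ω : ℝ} (hω : 0 < ω) (h : ω * |w.im| < π) : Complex.sinh (ω * w) ≠ 0 :=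
    sinh_ne_zero_of_abs_im_lt_pi (mul_ne_zero (Complex.ofReal_ne_zero.2 hω.ne') hw)
      (by simpa [abs_mul, abs_of_pos hω] using h)
  have hden := mul_ne_zero (mul_ne_zero hw (hsinh hω₁ h₁)) (hsinh hω₂ h₂)
  unfold doubleSineKernel
  fun_prop (disch := exact hden)

lemma norm_doubleSineKernel_le {c₁ c₂ : ℝ} (hc₁ : 0 < c₁) (hc₂ : 0 < c₂)
    (h₁ : c₁ * Real.exp (ω₁ * |w.re|) ≤ ‖Complex.sinh (ω₁ * w)‖)
    (h₂ : c₂ * Real.exp (ω₂ * |w.re|) ≤ ‖Complex.sinh (ω₂ * w)‖) :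
    ‖doubleSineKernel ω₁ ω₂ z w‖ ≤ Real.exp (2 * z.re * w.im) *
      Real.exp (-(ω₁ + ω₂ - 2 * |z.im|) * |w.re|) / (c₁ * c₂ * ‖w‖) := by
  rcases eq_or_ne w 0 with rfl | hw
  · simp [doubleSineKernel]
  have hexponent : (-2 * Complex.I * z * w).re ≤ 2 * z.re * w.im + 2 * |z.im| * |w.re| := by
    have hprod : z.im * w.re ≤ |z.im| * |w.re| := (le_abs_self _).trans_eq (abs_mul _ _)
    simp only [Complex.mul_re, Complex.mul_im, Complex.neg_re, Complex.neg_im, Complex.re_ofNat,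
      Complex.im_ofNat, Complex.I_re, Complex.I_im]
    linarith
  rw [doubleSineKernel, norm_div, norm_mul, norm_mul, Complex.norm_exp]
  calc Real.exp (-2 * Complex.I * z * w).re /
        (‖w‖ * ‖Complex.sinh (ω₁ * w)‖ * ‖Complex.sinh (ω₂ * w)‖)
      ≤ Real.exp (2 * z.re * w.im + 2 * |z.im| * |w.re|) /
        (‖w‖ * (c₁ * Real.exp (ω₁ * |w.re|)) * (c₂ * Real.exp (ω₂ * |w.re|))) := by gcongr
    _ = Real.exp (2 * z.re * w.im) *
        Real.exp (-(ω₁ + ω₂ - 2 * |z.im|) * |w.re|) / (c₁ * c₂ * ‖w‖) := by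
      rw [show -(ω₁ + ω₂ - 2 * |z.im|) * |w.re| =
        2 * |z.im| * |w.re| - ω₁ * |w.re| - ω₂ * |w.re| by ring, Real.exp_sub, Real.exp_sub,
        Real.exp_add]
      field_simp

lemma exists_norm_doubleSineKernel_line_le (hω₁ : 0 < ω₁) (hω₂ : 0 < ω₂) (hσ : 0 < σ)
    (h₁ : ω₁ * σ < π) (h₂ : ω₂ * σ < π) :
    ∃ C, ∀ (z : ℂ) (t : ℝ), ‖doubleSineKernel ω₁ ω₂ z (t + σ * Complex.I)‖ ≤
      C * Real.exp (2 * σ * z.re) * Real.exp (-(ω₁ + ω₂ - 2 * |z.im|) * |t|) := by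
  have hsin {ω : ℝ} (hω : 0 < ω) (h : ω * σ < π) : 0 < |Real.sin (ω * σ)| / 2 :=
    half_pos (abs_pos.2 (Real.sin_pos_of_pos_of_lt_pi (by positivity) h).ne')
  have hsinh {ω : ℝ} (hω : 0 < ω) (t : ℝ) : |Real.sin (ω * σ)| / 2 *
      Real.exp (ω * |((t : ℂ) + σ * Complex.I).re|) ≤
        ‖Complex.sinh (ω * (t + σ * Complex.I))‖ := by
    simpa [abs_mul, abs_of_pos hω] using
      abs_sin_im_mul_exp_abs_re_le_norm_sinh (ω * (t + σ * Complex.I))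
  set c₁ := |Real.sin (ω₁ * σ)| / 2
  set c₂ := |Real.sin (ω₂ * σ)| / 2
  have hc₁ : 0 < c₁ := hsin hω₁ h₁
  have hc₂ : 0 < c₂ := hsin hω₂ h₂
  refine ⟨(c₁ * c₂ * σ)⁻¹, fun z t => ?_⟩
  have him : σ ≤ ‖(t : ℂ) + σ * Complex.I‖ := by
    simpa [abs_of_pos hσ] using Complex.abs_im_le_norm ((t : ℂ) + σ * Complex.I)
  calc ‖doubleSineKernel ω₁ ω₂ z (t + σ * Complex.I)‖
      ≤ Real.exp (2 * σ * z.re) * Real.exp (-(ω₁ + ω₂ - 2 * |z.im|) * |t|) /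
        (c₁ * c₂ * ‖(t : ℂ) + σ * Complex.I‖) := by
        simpa [mul_right_comm] using
          norm_doubleSineKernel_le (z := z) hc₁ hc₂ (hsinh hω₁ t) (hsinh hω₂ t)
    _ ≤ Real.exp (2 * σ * z.re) * Real.exp (-(ω₁ + ω₂ - 2 * |z.im|) * |t|) /
        (c₁ * c₂ * σ) := by gcongr
    _ = (c₁ * c₂ * σ)⁻¹ * Real.exp (2 * σ * z.re) *
        Real.exp (-(ω₁ + ω₂ - 2 * |z.im|) * |t|) := by ring

lemma continuous_doubleSineKernel_line (hω₁ : 0 < ω₁) (hω₂ : 0 < ω₂) (hσ : 0 < σ)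
    (h₁ : ω₁ * σ < π) (h₂ : ω₂ * σ < π) (z : ℂ) :
    Continuous fun t : ℝ => doubleSineKernel ω₁ ω₂ z (t + σ * Complex.I) := by
  refine continuous_iff_continuousAt.2 fun t => ?_
  have hdiff : DifferentiableAt ℂ (doubleSineKernel ω₁ ω₂ z) (t + σ * Complex.I) :=
    differentiableAt_doubleSineKernel hω₁ hω₂ (ofReal_add_mul_I_ne_zero hσ.ne' t)
      (by simpa [abs_of_pos hσ] using h₁) (by simpa [abs_of_pos hσ] using h₂)
  exact ContinuousAt.comp (f := fun t : ℝ => (t : ℂ) + σ * Complex.I) hdiff.continuousAt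
    (by fun_prop)

lemma integrable_doubleSineKernel_line (hω₁ : 0 < ω₁) (hω₂ : 0 < ω₂) (hσ : 0 < σ)
    (h₁ : ω₁ * σ < π) (h₂ : ω₂ * σ < π) (hz : |z.im| < (ω₁ + ω₂) / 2) :
    Integrable fun t : ℝ => doubleSineKernel ω₁ ω₂ z (t + σ * Complex.I) := by
  obtain ⟨C, hC⟩ := exists_norm_doubleSineKernel_line_le hω₁ hω₂ hσ h₁ h₂
  exact ((integrable_exp_neg_mul_abs (by linarith)).const_mul _).mono'
    (continuous_doubleSineKernel_line hω₁ hω₂ hσ h₁ h₂ z).aestronglyMeasurable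
    (.of_forall (hC z))

lemma tendsto_doubleSineKernel_stripFilter_cocompact (hω₁ : 0 < ω₁) (hω₂ : 0 < ω₂)
    (hz : |z.im| ≤ (ω₁ + ω₂) / 2) (c : ℝ) :
    Tendsto (doubleSineKernel ω₁ ω₂ z) (stripFilter (cocompact ℝ) c) (𝓝 0) := by
  have hre := tendsto_norm_cocompact_atTop.comp
    (tendsto_re_stripFilter (l := cocompact ℝ) (c := c))
  have hinv : Tendsto (fun w : ℂ => Real.exp (2 * |z.re| * c) / (1 / 4 * (1 / 4) * ‖w‖))
      (stripFilter (cocompact ℝ) c) (𝓝 0) :=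
    ((tendsto_norm_cobounded_atTop.mono_left stripFilter_cocompact_le_cobounded).const_mul_atTop
      (by norm_num)).const_div_atTop _
  refine squeeze_zero_norm' ?_ hinv
  filter_upwards [eventually_abs_im_le_stripFilter, hre.eventually_ge_atTop ω₁⁻¹,
    hre.eventually_ge_atTop ω₂⁻¹] with w him hw₁ hw₂
  have hsinh {ω : ℝ} (hω : 0 < ω) (h : ω⁻¹ ≤ |w.re|) :
      1 / 4 * Real.exp (ω * |w.re|) ≤ ‖Complex.sinh (ω * w)‖ := by
    have := (inv_le_iff_one_le_mul₀' hω).1 h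
    simpa [abs_mul, abs_of_pos hω] using
      exp_abs_re_le_norm_sinh (w := ω * w) (by simpa [abs_mul, abs_of_pos hω] using this)
  have hgrowth : 2 * z.re * w.im ≤ 2 * |z.re| * c := by
    have : z.re * w.im ≤ |z.re| * c := (le_abs_self _).trans <| by rw [abs_mul]; gcongr
    linarith
  have hdecay : Real.exp (-(ω₁ + ω₂ - 2 * |z.im|) * |w.re|) ≤ 1 :=
    Real.exp_le_one_iff.2 (mul_nonpos_of_nonpos_of_nonneg (by linarith) (abs_nonneg _))
  calc ‖doubleSineKernel ω₁ ω₂ z w‖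
      ≤ Real.exp (2 * z.re * w.im) * Real.exp (-(ω₁ + ω₂ - 2 * |z.im|) * |w.re|) /
        (1 / 4 * (1 / 4) * ‖w‖) :=
        norm_doubleSineKernel_le (by norm_num) (by norm_num) (hsinh hω₁ hw₁) (hsinh hω₂ hw₂)
    _ ≤ Real.exp (2 * |z.re| * c) * 1 / (1 / 4 * (1 / 4) * ‖w‖) := by gcongr
    _ = Real.exp (2 * |z.re| * c) / (1 / 4 * (1 / 4) * ‖w‖) := by rw [mul_one]

theorem tendsto_integral_doubleSineKernel_stripFilter_atBot (hω₁ : 0 < ω₁) (hω₂ : 0 < ω₂)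
    (hσ : 0 < σ) (h₁ : ω₁ * σ < π) (h₂ : ω₂ * σ < π) (hc : c < (ω₁ + ω₂) / 2) :
    Tendsto (fun z => ∫ t : ℝ, doubleSineKernel ω₁ ω₂ z (t + σ * Complex.I))
      (stripFilter atBot c) (𝓝 0) := by
  obtain ⟨C, hC⟩ := exists_norm_doubleSineKernel_line_le hω₁ hω₂ hσ h₁ h₂
  have hexp : Tendsto (fun z : ℂ => |C| * Real.exp (2 * σ * z.re) *
      ∫ t : ℝ, Real.exp (-(ω₁ + ω₂ - 2 * c) * |t|)) (stripFilter atBot c) (𝓝 0) := by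
    have hre := (tendsto_re_stripFilter (l := atBot) (c := c)).const_mul_atBot
      (by positivity : 0 < 2 * σ)
    simpa using ((Real.tendsto_exp_atBot.comp hre).const_mul |C|).mul_const
      (∫ t : ℝ, Real.exp (-(ω₁ + ω₂ - 2 * c) * |t|))
  refine squeeze_zero_norm' ?_ hexp
  filter_upwards [eventually_abs_im_le_stripFilter] with z hz
  rw [← integral_const_mul]
  refine norm_integral_le_of_norm_le
    ((integrable_exp_neg_mul_abs (by linarith)).const_mul _) (.of_forall fun t => ?_)
  refine (hC z t).trans ?_
  gcongr
  exact le_abs_self C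

end DoubleSineKernel

section Inversion

variable {ω₁ ω₂ σ : ℝ} {z : ℂ}

lemma tendsto_mul_doubleSineKernel_add_neg_sub_principalPart (hω₁ : ω₁ ≠ 0) (hω₂ : ω₂ ≠ 0)
    (z : ℂ) :
    Tendsto (fun w => w * (doubleSineKernel ω₁ ω₂ z w + doubleSineKernel ω₁ ω₂ (-z) w -
      (2 / (ω₁ * ω₂) * w⁻¹ ^ 3 +
        2 / (ω₁ * ω₂) * (-(2 * z ^ 2) - (ω₁ ^ 2 + ω₂ ^ 2) / 6) * w⁻¹))) (𝓝[≠] 0) (𝓝 0) := by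
  have hsinh {ω : ℝ} (hω : ω ≠ 0) :=
    (hasQuadraticExpansion_sinh_div.comp_const_mul (Complex.ofReal_ne_zero.2 hω)).inv
  have hexpansion := (hasQuadraticExpansion_cos_two_mul z).mul ((hsinh hω₁).mul (hsinh hω₂))
  rw [show -(2 * z ^ 2) + (-((ω₁ : ℂ) ^ 2 * (1 / 6)) + -((ω₂ : ℂ) ^ 2 * (1 / 6))) =
    -(2 * z ^ 2) - ((ω₁ : ℂ) ^ 2 + (ω₂ : ℂ) ^ 2) / 6 by ring] at hexpansion
  simpa only [doubleSineKernel_add_neg_left hω₁ hω₂] using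
    hexpansion.tendsto_mul_sub_principalPart (2 / (ω₁ * ω₂))

theorem integral_doubleSineKernel_add_integral_neg (hω₁ : 0 < ω₁) (hω₂ : 0 < ω₂) (hσ : 0 < σ)
    (h₁ : ω₁ * σ < π) (h₂ : ω₂ * σ < π) (hz : |z.im| < (ω₁ + ω₂) / 2) :
    (∫ t : ℝ, doubleSineKernel ω₁ ω₂ z (t + σ * Complex.I)) +
      ∫ t : ℝ, doubleSineKernel ω₁ ω₂ (-z) (t + σ * Complex.I) =
      π * Complex.I / (ω₁ * ω₂) * (4 * z ^ 2 + (ω₁ ^ 2 + ω₂ ^ 2) / 3) := by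
  have hz_neg : |(-z).im| < (ω₁ + ω₂) / 2 := by simpa using hz
  have hint := integrable_doubleSineKernel_line hω₁ hω₂ hσ h₁ h₂ hz
  have hint_neg := integrable_doubleSineKernel_line hω₁ hω₂ hσ h₁ h₂ hz_neg
  let s : Set ℂ := {w | ω₁ * |w.im| < π} ∩ {w | ω₂ * |w.im| < π}
  have hs : IsOpen s :=
    (isOpen_lt (by fun_prop) continuous_const).inter (isOpen_lt (by fun_prop) continuous_const)
  have hstrip : {w : ℂ | |w.im| ≤ σ} ⊆ s := fun w hw =>
    ⟨(mul_le_mul_of_nonneg_left hw hω₁.le).trans_lt h₁,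
      (mul_le_mul_of_nonneg_left hw hω₂.le).trans_lt h₂⟩
  have hdiff (z : ℂ) : DifferentiableOn ℂ (doubleSineKernel ω₁ ω₂ z) (s \ {0}) := fun w hw =>
    (differentiableAt_doubleSineKernel hω₁ hω₂ hw.2 hw.1.1 hw.1.2).differentiableWithinAt
  have hodd (w : ℂ) : doubleSineKernel ω₁ ω₂ z (-w) + doubleSineKernel ω₁ ω₂ (-z) (-w) =
      -(doubleSineKernel ω₁ ω₂ z w + doubleSineKernel ω₁ ω₂ (-z) w) := by
    rw [doubleSineKernel_neg_right, doubleSineKernel_neg_right, neg_neg, neg_add, add_comm]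
  have hdecay := (tendsto_doubleSineKernel_stripFilter_cocompact hω₁ hω₂ hz.le σ).add
    (tendsto_doubleSineKernel_stripFilter_cocompact hω₁ hω₂ hz_neg.le σ)
  rw [add_zero] at hdecay
  rw [← integral_add hint hint_neg]
  refine (integral_line_of_odd hσ hs hstrip ((hdiff z).add (hdiff (-z))) hodd hdecay
    (hint.add hint_neg)
    (tendsto_mul_doubleSineKernel_add_neg_sub_principalPart hω₁.ne' hω₂.ne' z)).trans ?_
  ring

end Inversion

section QuantumDilogarithm

variable {b ε c : ℝ} {z : ℂ}

lemma ebE_eq_exp_integral_doubleSineKernel (b ε : ℝ) (z : ℂ) :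
    ebE b ε z =
      Complex.exp (1 / 4 * ∫ t : ℝ, doubleSineKernel b b⁻¹ z (t + ε * Complex.I)) := by
  simp only [ebE, ebIntegrand, doubleSineKernel, Complex.ofReal_inv, mul_comm Complex.I (ε : ℂ)]

theorem ebE_mul_ebE_neg (hb : 0 < b) (hε : 0 < ε) (h₁ : b * ε < π) (h₂ : b⁻¹ * ε < π)
    (hz : |z.im| < (b + b⁻¹) / 2) :
    ebE b ε z * ebE b ε (-z) =
      Complex.exp (π * Complex.I * (z ^ 2 + ((b : ℂ) ^ 2 + (b : ℂ)⁻¹ ^ 2) / 12)) := by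
  have hb_ne : (b : ℂ) ≠ 0 := Complex.ofReal_ne_zero.2 hb.ne'
  rw [ebE_eq_exp_integral_doubleSineKernel, ebE_eq_exp_integral_doubleSineKernel,
    ← Complex.exp_add, ← mul_add,
    integral_doubleSineKernel_add_integral_neg hb (inv_pos.2 hb) hε h₁ h₂ hz,
    Complex.ofReal_inv, mul_inv_cancel₀ hb_ne]
  ring_nf

theorem tendsto_ebE_stripFilter_atBot (hb : 0 < b) (hε : 0 < ε) (h₁ : b * ε < π)
    (h₂ : b⁻¹ * ε < π) (hc : c < (b + b⁻¹) / 2) :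
    Tendsto (ebE b ε) (stripFilter atBot c) (𝓝 1) := by
  have hintegral :=
    tendsto_integral_doubleSineKernel_stripFilter_atBot hb (inv_pos.2 hb) hε h₁ h₂ hc
  have hexp := (Complex.continuous_exp.tendsto _).comp (hintegral.const_mul (1 / 4))
  rw [mul_zero, Complex.exp_zero] at hexp
  exact hexp.congr fun z => (ebE_eq_exp_integral_doubleSineKernel b ε z).symm

theorem tendsto_ebE_mul_exp_stripFilter_atTop (hb : 0 < b) (hε : 0 < ε) (h₁ : b * ε < π)
    (h₂ : b⁻¹ * ε < π) (hc : c < (b + b⁻¹) / 2) :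
    Tendsto (fun z => ebE b ε z * Complex.exp (-(π * Complex.I) * z ^ 2)) (stripFilter atTop c)
      (𝓝 (Complex.exp (π * Complex.I * ((b : ℂ) ^ 2 + (b : ℂ)⁻¹ ^ 2) / 12))) := by
  have hleft := (tendsto_ebE_stripFilter_atBot hb hε h₁ h₂ hc).comp tendsto_neg_stripFilter_atTop
  have hquot := (hleft.inv₀ one_ne_zero).const_mul
    (Complex.exp (π * Complex.I * ((b : ℂ) ^ 2 + (b : ℂ)⁻¹ ^ 2) / 12))
  rw [inv_one, mul_one] at hquot
  refine hquot.congr' ?_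
  filter_upwards [eventually_abs_im_le_stripFilter] with z hz
  have hne : ebE b ε (-z) ≠ 0 := Complex.exp_ne_zero _
  rw [Function.comp_apply, mul_inv_eq_iff_eq_mul₀ hne, mul_right_comm (ebE b ε z),
    ebE_mul_ebE_neg hb hε h₁ h₂ (hz.trans_lt hc), ← Complex.exp_add]
  ring_nf

lemma mul_pi_mul_min_inv_div_two_lt_pi (hb : 0 < b) : b * (π * min b b⁻¹ / 2) < π :=
  calc b * (π * min b b⁻¹ / 2) ≤ b * (π * b⁻¹ / 2) := by gcongr; exact min_le_right _ _
    _ = π / 2 := by field_simp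
    _ < π := half_lt_self Real.pi_pos

lemma inv_mul_pi_mul_min_inv_div_two_lt_pi (hb : 0 < b) : b⁻¹ * (π * min b b⁻¹ / 2) < π := by
  simpa only [inv_inv, min_comm] using mul_pi_mul_min_inv_div_two_lt_pi (inv_pos.2 hb)

theorem tendsto_eb_stripFilter_atBot (hb : 0 < b) (hc : c < (b + b⁻¹) / 2) :
    Tendsto (eb b) (stripFilter atBot c) (𝓝 1) :=
  tendsto_ebE_stripFilter_atBot hb (by positivity) (mul_pi_mul_min_inv_div_two_lt_pi hb)
    (inv_mul_pi_mul_min_inv_div_two_lt_pi hb) hc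

theorem tendsto_eb_mul_exp_stripFilter_atTop (hb : 0 < b) (hc : c < (b + b⁻¹) / 2) :
    Tendsto (fun z => eb b z * Complex.exp (-(π * Complex.I) * z ^ 2)) (stripFilter atTop c)
      (𝓝 (Complex.exp (π * Complex.I * ((b : ℂ) ^ 2 + (b : ℂ)⁻¹ ^ 2) / 12))) :=
  tendsto_ebE_mul_exp_stripFilter_atTop hb (by positivity) (mul_pi_mul_min_inv_div_two_lt_pi hb)
    (inv_mul_pi_mul_min_inv_div_two_lt_pi hb) hc

end QuantumDilogarithm

/-- asymptotics of `e_b`: `e_b(z) → 1` as `Re z → −∞` and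
`e_b(z)·e^{−πiz²} → e^{πi(b²+b⁻²)/12}` as `Re z → +∞`, both uniformly on the strip
`|Im z| ≤ (b+b⁻¹)/2 − η`. -/
theorem statement6 (b : ℝ) (hb : 0 < b) (η : ℝ) (hη₁ : 0 < η) (hη₂ : η < (b + b⁻¹) / 2) :
    (∀ d : ℝ, 0 < d → ∃ R : ℝ, ∀ z : ℂ, |z.im| ≤ (b + b⁻¹) / 2 - η → z.re ≤ -R →
      ‖eb b z - 1‖ < d) ∧
    (∀ d : ℝ, 0 < d → ∃ R : ℝ, ∀ z : ℂ, |z.im| ≤ (b + b⁻¹) / 2 - η → R ≤ z.re →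
      ‖eb b z * Complex.exp (-((π : ℂ) * Complex.I) * z ^ 2) -
          Complex.exp ((π : ℂ) * Complex.I * ((b : ℂ) ^ 2 + ((b : ℂ)⁻¹) ^ 2) / 12)‖ < d) := by
  have hc : (b + b⁻¹) / 2 - η < (b + b⁻¹) / 2 := sub_lt_self _ hη₁
  refine ⟨fun d hd => ?_, fun d hd => ?_⟩
  · obtain ⟨R, hR⟩ := eventually_atBot.1 <| eventually_stripFilter.1 <|
      Metric.tendsto_nhds.1 (tendsto_eb_stripFilter_atBot hb hc) d hd
    refine ⟨-R, fun z him hre => ?_⟩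
    simpa only [dist_eq_norm] using hR z.re (by linarith) z rfl him
  · obtain ⟨R, hR⟩ := eventually_atTop.1 <| eventually_stripFilter.1 <|
      Metric.tendsto_nhds.1 (tendsto_eb_mul_exp_stripFilter_atTop hb hc) d hd
    refine ⟨R, fun z him hre => ?_⟩
    simpa only [dist_eq_norm] using hR z.re hre z rfl him

end
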